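/- arXiv:2501.10994 — 2 statements merged into one kernel-verified Lean document; each statement's English description precedes it below -/
import Mathlib

section
/- Let μ be a Borel measure on S, let D ⊆ S be Borel, and let t_0, c > 0. If ∫_0^{t_0} ∫_D p_s(x,y) μ(dy) ds ≤ c for m-a.e. x ∈ S, then in fact ∫_0^{t_0} ∫_D p_s(x,y) μ(dy) ds ≤ c for every x ∈ S; in particular sup_{x ∈ S} ∫_0^{t_0} ∫_D p_s(x,y) μ(dy) ds ≤ c. -/
open MeasureTheory ENNReal Set Filter Topology

lemma aux_ess_cover {S ι : Type*} [MeasurableSpace S] (m : Measure S) [SFinite m]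
    (H : ι → Set S) (hH : ∀ i, MeasurableSet (H i)) (F : Set ι) :
    ∃ T : Set ι, T ⊆ F ∧ T.Countable ∧ ∀ i ∈ F, m (H i \ ⋃ j ∈ T, H j) = 0 := by
  set ν := m.toFinite with hν
  let 𝒯 : Set (Set ι) := {T | T ⊆ F ∧ T.Countable}
  let V : Set ℝ≥0∞ := (fun T : Set ι => ν (⋃ j ∈ T, H j)) '' 𝒯
  have hVne : V.Nonempty := ⟨_, ∅, ⟨empty_subset _, countable_empty⟩, rfl⟩
  obtain ⟨u, -, hu, huV⟩ := exists_seq_tendsto_sSup hVne (OrderTop.bddAbove V)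
  choose T hT hTu using huV
  have hmem : (⋃ n, T n) ∈ 𝒯 :=
    ⟨iUnion_subset fun n => (hT n).1, countable_iUnion fun n => (hT n).2⟩
  have hge : sSup V ≤ ν (⋃ j ∈ ⋃ n, T n, H j) := by
    refine le_of_tendsto' hu fun n => ?_
    rw [← hTu n]
    exact measure_mono (biUnion_subset_biUnion_left (subset_iUnion T n))
  refine ⟨⋃ n, T n, hmem.1, hmem.2, fun i hi => ?_⟩
  have hmeas : MeasurableSet (⋃ j ∈ ⋃ n, T n, H j) :=
    MeasurableSet.biUnion hmem.2 fun j _ => hH j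
  have h1 : ν (⋃ j ∈ insert i (⋃ n, T n), H j) ≤ sSup V :=
    le_sSup ⟨_, ⟨insert_subset hi hmem.1, hmem.2.insert i⟩, rfl⟩
  rw [biUnion_insert, union_comm, ← union_sdiff_self,
    measure_union disjoint_sdiff_right ((hH i).diff hmeas)] at h1
  have h2 : ν (H i \ ⋃ j ∈ ⋃ n, T n, H j) = 0 := by
    have h3 := h1.trans hge
    by_contra hne
    exact absurd h3 (not_le.2 (ENNReal.lt_add_right (measure_ne_top _ _) hne))
  exact absolutelyContinuous_toFinite m h2

lemma aux_sfinite {S : Type*} [MeasurableSpace S] (μ : Measure S)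
    (E : ℕ → Set S) (hE : ∀ i, MeasurableSet (E i)) (hfin : ∀ i, μ (E i) ≠ ∞) :
    SFinite (μ.restrict (⋃ i, E i)) := by
  rw [← iUnion_disjointed, Measure.restrict_iUnion (disjoint_disjointed E)
    (fun n => MeasurableSet.disjointed hE n)]
  have : ∀ n, IsFiniteMeasure (μ.restrict (disjointed E n)) := fun n =>
    ⟨by rw [Measure.restrict_apply_univ]
        exact (measure_mono (disjointed_subset E n)).trans_lt (hfin n).lt_top⟩
  infer_instance

lemma aux_sfinite' {S ι : Type*} [MeasurableSpace S] (μ : Measure S)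
    (T : Set ι) (hT : T.Countable) (g : ι → S → ℝ≥0∞) (hg : ∀ i, Measurable (g i))
    (hfin : ∀ i ∈ T, ∫⁻ y, g i y ∂μ ≠ ∞) :
    SFinite (μ.restrict (⋃ i ∈ T, {y | g i y ≠ 0})) := by
  have := hT.to_subtype
  rcases T.eq_empty_or_nonempty with h | h
  · subst h; simp; infer_instance
  have := h.to_subtype
  obtain ⟨e, he⟩ := exists_surjective_nat (T × ℕ)
  have key : (⋃ i ∈ T, {y | g i y ≠ 0})
      = ⋃ n, {y | ((e n).2 + 1 : ℝ≥0∞)⁻¹ ≤ g (e n).1 y} := by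
    ext y
    simp only [mem_iUnion, mem_setOf_eq, exists_prop]
    constructor
    · rintro ⟨i, hi, hy⟩
      obtain ⟨k, hk⟩ := ENNReal.exists_inv_nat_lt hy
      obtain ⟨n, hn⟩ := he (⟨i, hi⟩, k)
      refine ⟨n, ?_⟩
      rw [hn]
      refine le_trans ?_ hk.le
      exact ENNReal.inv_le_inv.2 le_self_add
    · rintro ⟨n, hn⟩
      refine ⟨(e n).1, (e n).1.2, fun h0 => ?_⟩
      rw [h0] at hn
      have : ((e n).2 + 1 : ℝ≥0∞) = ∞ := by simpa using hn
      exact absurd this (by finiteness)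
  rw [key]
  refine aux_sfinite μ _ (fun n => measurableSet_le measurable_const (hg _)) fun n => ?_
  have := meas_ge_le_lintegral_div (μ := μ) (hg (e n).1).aemeasurable
    (ε := ((e n).2 + 1 : ℝ≥0∞)⁻¹) (by simp) (by simp)
  refine ne_top_of_le_ne_top ?_ this
  exact ENNReal.div_ne_top (hfin _ (e n).1.2) (by simp)

lemma aux_tonelli {S : Type*} [MeasurableSpace S]
    (m : Measure S) [SFinite m]
    (p : ℝ → S → S → ℝ≥0∞)
    (hp_meas : Measurable fun q : ℝ × S × S => p q.1 q.2.1 q.2.2)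
    (hCK : ∀ s > (0 : ℝ), ∀ t > (0 : ℝ), ∀ x y : S,
      p (t + s) x y = ∫⁻ z, p t x z * p s z y ∂m)
    (hsub : ∀ t > (0 : ℝ), ∀ x : S, (∫⁻ y, p t x y ∂m) ≤ 1)
    (ν : Measure S) [SFinite ν] (t₀ : ℝ) (C : ℝ≥0∞)
    (hae : ∀ᵐ x ∂m, (∫⁻ s in Set.Ioo (0 : ℝ) t₀, ∫⁻ y, p s x y ∂ν) ≤ C) (x : S) :
    (∫⁻ s in Set.Ioo (0 : ℝ) t₀, ∫⁻ y, p s x y ∂ν) ≤ C := by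
  have hf : Measurable fun q : ℝ × S => ∫⁻ y, p q.1 q.2 y ∂ν := by
    apply Measurable.lintegral_prod_right' (f := fun r : (ℝ × S) × S => p r.1.1 r.1.2 r.2)
    exact hp_meas.comp (by fun_prop :
      Measurable fun r : (ℝ × S) × S => (r.1.1, r.1.2, r.2))
  have hp2 : ∀ t, Measurable fun q : S × S => p t q.1 q.2 := fun t =>
    hp_meas.comp (by fun_prop : Measurable fun q : S × S => (t, q.1, q.2))
  have hp1 : ∀ t x, Measurable (p t x) := fun t x =>
    hp_meas.comp (by fun_prop : Measurable fun y : S => (t, x, y))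
  have step : ∀ ε > (0 : ℝ), (∫⁻ s in Set.Ioo ε t₀, ∫⁻ y, p s x y ∂ν) ≤ C := by
    intro ε hε
    calc (∫⁻ s in Set.Ioo ε t₀, ∫⁻ y, p s x y ∂ν)
        = ∫⁻ s, (Set.Ioo ε t₀).indicator (fun s => ∫⁻ y, p s x y ∂ν) s := by
          rw [lintegral_indicator measurableSet_Ioo]
      _ = ∫⁻ s, (Set.Ioo ε t₀).indicator (fun s => ∫⁻ y, p s x y ∂ν) (s + ε) :=
          (lintegral_add_right_eq_self _ ε).symm
      _ ≤ ∫⁻ s, (Set.Ioo 0 t₀).indicator (fun s => ∫⁻ z, p ε x z * ∫⁻ y, p s z y ∂ν ∂m) s := by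
          refine lintegral_mono fun s => ?_
          by_cases hs : s + ε ∈ Set.Ioo ε t₀
          swap
          · rw [indicator_of_notMem hs]
            exact zero_le
          rw [indicator_of_mem hs]
          have hs0 : 0 < s := by linarith [hs.1]
          have hs1 : s ∈ Set.Ioo 0 t₀ := ⟨hs0, by linarith [hs.2]⟩
          rw [indicator_of_mem hs1, add_comm s ε]
          simp_rw [hCK s hs0 ε hε x]
          rw [lintegral_lintegral_swap]
          · refine lintegral_mono fun z => ?_
            exact (lintegral_const_mul _ (hp1 s z)).le
          · refine Measurable.aemeasurable ?_
            exact ((hp1 ε x).comp measurable_snd).mul ((hp2 s).comp measurable_swap)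
      _ = ∫⁻ s in Set.Ioo 0 t₀, ∫⁻ z, p ε x z * ∫⁻ y, p s z y ∂ν ∂m := by
          rw [lintegral_indicator measurableSet_Ioo]
      _ = ∫⁻ z, (∫⁻ s in Set.Ioo (0 : ℝ) t₀, p ε x z * ∫⁻ y, p s z y ∂ν) ∂m := by
          rw [lintegral_lintegral_swap]
          exact (((hp1 ε x).comp measurable_snd).mul hf).aemeasurable
      _ = ∫⁻ z, p ε x z * (∫⁻ s in Set.Ioo (0 : ℝ) t₀, ∫⁻ y, p s z y ∂ν) ∂m := by
          refine lintegral_congr fun z => ?_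
          exact lintegral_const_mul _ (hf.comp (by fun_prop : Measurable fun s : ℝ => (s, z)))
      _ ≤ ∫⁻ z, p ε x z * C ∂m := by
          refine lintegral_mono_ae ?_
          filter_upwards [hae] with z hz
          gcongr
      _ = (∫⁻ z, p ε x z ∂m) * C := lintegral_mul_const _ (hp1 ε x)
      _ ≤ 1 * C := by gcongr; exact hsub ε hε x
      _ = C := one_mul C
  have hU : Set.Ioo (0 : ℝ) t₀ = ⋃ n : ℕ, Set.Ioo (1 / ((n : ℝ) + 1)) t₀ := by
    ext s
    simp only [mem_iUnion, mem_Ioo]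
    constructor
    · rintro ⟨h0, h1⟩
      obtain ⟨n, hn⟩ := exists_nat_one_div_lt h0
      exact ⟨n, hn, h1⟩
    · rintro ⟨n, h0, h1⟩
      exact ⟨lt_trans (by positivity) h0, h1⟩
  rw [hU, setLIntegral_iUnion_of_directed]
  · exact iSup_le fun n => step _ (by positivity)
  · refine Monotone.directed_le fun a b hab => ?_
    refine Set.Ioo_subset_Ioo_left ?_
    exact one_div_le_one_div_of_le (by positivity) (by gcongr)


/-- Let `μ` be a Borel measure on `S`, `D ⊆ S` Borel, and `t_0, c > 0`. If
`∫_0^{t_0} ∫_D p_s(x,y) μ(dy) ds ≤ c` for `m`-a.e. `x ∈ S`, then the same bound holds for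
every `x ∈ S`; in particular `sup_{x ∈ S} ∫_0^{t_0} ∫_D p_s(x,y) μ(dy) ds ≤ c`. -/
theorem truncated_potential_ae_bound_to_pointwise
    {S : Type*} [TopologicalSpace S] [LocallyCompactSpace S]
    [TopologicalSpace.SeparableSpace S] [TopologicalSpace.MetrizableSpace S]
    [MeasurableSpace S] [BorelSpace S]
    (m : Measure S) [SigmaFinite m] [IsFiniteMeasureOnCompacts m]
    (hfull : ∀ U : Set S, IsOpen U → U.Nonempty → 0 < m U)
    (p : ℝ → S → S → ℝ≥0∞)
    (hp_meas : Measurable fun q : ℝ × S × S => p q.1 q.2.1 q.2.2)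
    (hsymm : ∀ t > (0 : ℝ), ∀ x y : S, p t x y = p t y x)
    (hCK : ∀ s > (0 : ℝ), ∀ t > (0 : ℝ), ∀ x y : S,
      p (t + s) x y = ∫⁻ z, p t x z * p s z y ∂m)
    (hsub : ∀ t > (0 : ℝ), ∀ x : S, (∫⁻ y, p t x y ∂m) ≤ 1)
    (μ : Measure S) (D : Set S) (hD : MeasurableSet D)
    (t₀ c : ℝ) (ht₀ : 0 < t₀) (hc : 0 < c)
    (hae : ∀ᵐ x ∂m,
      (∫⁻ s in Set.Ioo (0 : ℝ) t₀, ∫⁻ y in D, p s x y ∂μ) ≤ ENNReal.ofReal c) :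
    (∀ x : S,
      (∫⁻ s in Set.Ioo (0 : ℝ) t₀, ∫⁻ y in D, p s x y ∂μ) ≤ ENNReal.ofReal c)
    ∧ (⨆ x : S, ∫⁻ s in Set.Ioo (0 : ℝ) t₀, ∫⁻ y in D, p s x y ∂μ)
        ≤ ENNReal.ofReal c := by
  suffices h : ∀ x : S,
      (∫⁻ s in Set.Ioo (0 : ℝ) t₀, ∫⁻ y in D, p s x y ∂μ) ≤ ENNReal.ofReal c from
    ⟨h, iSup_le h⟩
  have hp1 : ∀ t x, Measurable (p t x) := fun t x =>
    hp_meas.comp (by fun_prop : Measurable fun y : S => (t, x, y))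
  -- good pairs
  let G : ℕ → Set (S × ℝ) := fun n =>
    {q | 1 / ((n : ℝ) + 1) < q.2 ∧ ∫⁻ y in D, p q.2 q.1 y ∂μ ≠ ∞}
  have hcov : ∀ n : ℕ, ∃ T : Set (S × ℝ), T ⊆ G n ∧ T.Countable ∧ ∀ q ∈ G n, ∀ y,
      p q.2 q.1 y ≠ 0 → ∃ r ∈ T, p r.2 r.1 y ≠ 0 := by
    intro n
    set a : ℝ := 1 / ((n : ℝ) + 1) with ha
    have ha0 : 0 < a := by positivity
    obtain ⟨T, hTG, hTc, hT⟩ := aux_ess_cover m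
      (fun q : S × ℝ => {w | p (q.2 - a) q.1 w ≠ 0})
      (fun q => (hp1 _ _) (measurableSet_singleton 0).compl) (G n)
    have hint : ∀ q ∈ G n, ∀ y, p q.2 q.1 y = ∫⁻ w, p (q.2 - a) q.1 w * p a w y ∂m := by
      intro q hq y
      have := hCK a ha0 (q.2 - a) (sub_pos.2 hq.1) q.1 y
      rwa [sub_add_cancel] at this
    have hpa : ∀ y, Measurable fun w => p a w y := fun y =>
      hp_meas.comp (by fun_prop : Measurable fun w : S => (a, w, y))
    have hmul : ∀ (q : S × ℝ) (y : S), Measurable fun w => p (q.2 - a) q.1 w * p a w y :=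
      fun q y => (hp1 _ _).mul (hpa y)
    refine ⟨T, hTG, hTc, fun q hq y hy => ?_⟩
    by_contra! hcon
    apply hy
    rw [hint q hq y, lintegral_eq_zero_iff (hmul q y)]
    have h1 : ∀ᵐ w ∂m, ∀ r ∈ T, p (r.2 - a) r.1 w * p a w y = 0 := by
      rw [ae_ball_iff hTc]
      intro r hr
      have h2 := hcon r hr
      rw [hint r (hTG hr) y, lintegral_eq_zero_iff (hmul r y)] at h2
      exact h2
    have h3 : ∀ᵐ w ∂m, w ∉ {w | p (q.2 - a) q.1 w ≠ 0} \
        ⋃ r ∈ T, {w | p (r.2 - a) r.1 w ≠ 0} := measure_eq_zero_iff_ae_notMem.1 (hT q hq)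
    filter_upwards [h1, h3] with w hw1 hw3
    by_contra hne
    have hne' := mul_ne_zero_iff.1 hne
    apply hw3
    refine ⟨hne'.1, fun hmem => ?_⟩
    obtain ⟨r, hr, hrw⟩ := mem_iUnion₂.1 hmem
    exact mul_ne_zero hrw hne'.2 (hw1 r hr)
  choose T hTG hTc hT using hcov
  let C : Set S := ⋃ r ∈ ⋃ n, T n, {y | p r.2 r.1 y ≠ 0}
  have hTTc : (⋃ n, T n).Countable := countable_iUnion hTc
  have hCm : MeasurableSet C := MeasurableSet.biUnion hTTc
    fun r _ => (hp1 _ _) (measurableSet_singleton 0).compl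
  have hsf : SFinite ((μ.restrict D).restrict C) := by
    refine aux_sfinite' (μ.restrict D) _ hTTc (fun r : S × ℝ => p r.2 r.1)
      (fun r => hp1 _ _) ?_
    intro r hr
    obtain ⟨n, hn⟩ := mem_iUnion.1 hr
    exact (hTG n hn).2
  have hC : ∀ z s, 0 < s → ∫⁻ y in D, p s z y ∂μ ≠ ∞ → ∀ y ∉ C, p s z y = 0 := by
    intro z s hs hfin y hy
    obtain ⟨n, hn⟩ := exists_nat_one_div_lt hs
    by_contra hne
    obtain ⟨r, hr, hry⟩ := hT n (z, s) ⟨hn, hfin⟩ y hne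
    exact hy (mem_biUnion (mem_iUnion.2 ⟨n, hr⟩) hry)
  -- points outside C are dead
  have hdead : ∀ y ∉ C, ∀ u > (0 : ℝ), ∀ x, p u x y = 0 := by
    intro y hy u hu x
    have hmeas : Measurable fun q : S × ℝ => p q.2 q.1 y :=
      hp_meas.comp (by fun_prop : Measurable fun q : S × ℝ => (q.2, q.1, y))
    have h1 : ∀ᵐ z ∂m, ∀ᵐ s ∂(volume.restrict (Set.Ioo (0 : ℝ) t₀)), p s z y = 0 := by
      filter_upwards [hae] with z hz
      have hB : MeasurableSet {s : ℝ | p s z y ≠ 0} :=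
        (hmeas.comp (by fun_prop : Measurable fun s : ℝ => (z, s)))
          (measurableSet_singleton 0).compl
      have hle : ∫⁻ s in Set.Ioo (0 : ℝ) t₀, {s : ℝ | p s z y ≠ 0}.indicator (fun _ => ∞) s
          ≤ ∫⁻ s in Set.Ioo (0 : ℝ) t₀, ∫⁻ y in D, p s z y ∂μ := by
        refine setLIntegral_mono' measurableSet_Ioo fun s hs => ?_
        by_cases hs' : s ∈ {s : ℝ | p s z y ≠ 0}
        swap
        · rw [indicator_of_notMem hs']
          exact zero_le
        rw [indicator_of_mem hs']
        by_contra hlt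
        exact hs' (hC z s hs.1 (fun h => hlt h.ge) y hy)
      rw [lintegral_indicator_const hB] at hle
      have hlt := (hle.trans hz).trans_lt ENNReal.ofReal_lt_top
      rw [ae_iff]
      by_contra hne
      rw [ENNReal.top_mul hne] at hlt
      exact lt_irrefl _ hlt
    have h2 : ∀ᵐ s ∂(volume.restrict (Set.Ioo (0 : ℝ) t₀)), ∀ᵐ z ∂m, p s z y = 0 :=
      (Measure.ae_ae_comm (p := fun z s => p s z y = 0) (hmeas (measurableSet_singleton 0))).1 h1
    have h3 : ∃ s ∈ Set.Ioo (0 : ℝ) (min t₀ u), ∀ᵐ z ∂m, p s z y = 0 := by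
      have h4 : ∀ᵐ s ∂(volume.restrict (Set.Ioo (0 : ℝ) (min t₀ u))), ∀ᵐ z ∂m, p s z y = 0 :=
        ae_restrict_of_ae_restrict_of_subset (Set.Ioo_subset_Ioo_right (min_le_left _ _)) h2
      have : NeZero (volume.restrict (Set.Ioo (0 : ℝ) (min t₀ u))) := ⟨by
        rw [Ne, Measure.restrict_eq_zero, Real.volume_Ioo]
        simp [ht₀, hu]⟩
      obtain ⟨s, h5, h6⟩ := (h4.and (ae_restrict_mem measurableSet_Ioo)).exists
      exact ⟨s, h6, h5⟩
    obtain ⟨s, hs, hz⟩ := h3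
    have h7 := hCK s hs.1 (u - s) (by have := hs.2.trans_le (min_le_right _ _); linarith) x y
    rw [sub_add_cancel] at h7
    rw [h7]
    refine (lintegral_congr_ae ?_).trans lintegral_zero
    filter_upwards [hz] with z hz
    simp [hz]
  have heq : ∀ s > (0 : ℝ), ∀ x,
      ∫⁻ y in D, p s x y ∂μ = ∫⁻ y, p s x y ∂((μ.restrict D).restrict C) := by
    intro s hs x
    rw [← lintegral_indicator hCm]
    refine lintegral_congr fun y => ?_
    by_cases hy : y ∈ C
    · rw [indicator_of_mem hy]
    · rw [indicator_of_notMem hy, hdead y hy s hs x]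
  have heq2 : ∀ x, (∫⁻ s in Set.Ioo (0 : ℝ) t₀, ∫⁻ y in D, p s x y ∂μ)
      = ∫⁻ s in Set.Ioo (0 : ℝ) t₀, ∫⁻ y, p s x y ∂((μ.restrict D).restrict C) :=
    fun x => setLIntegral_congr_fun measurableSet_Ioo fun s hs => heq s hs.1 x
  simp_rw [heq2] at hae ⊢
  exact aux_tonelli m p hp_meas hCK hsub _ t₀ _ hae
end

section
/- Assume: (B1) p is jointly continuous on (0,∞) × S × S with values in [0,∞); (B2) μ, μ_1, μ_2, … are Radon measures on S with μ_n → μ vaguely; (B3) for every compact K ⊆ S, lim_{t→0} sup_{n ≥ 1} sup_{x ∈ K} ∫_0^t ∫_K p_s(x,y) μ_n(dy) ds = 0. Then there exists an increasing sequence (V_k)_{k ≥ 1} of relatively compact open subsets of S with ∪_{k ≥ 1} V_k = S such that for every k ≥ 1, lim_{n→∞} sup_{x ∈ closure(V_k)} |G_1μ_n^{V_k}(x) − G_1μ^{V_k}(x)| = 0, where ν^{V}(dy) := 1_V(y) ν(dy) denotes the restriction of a measure ν to V; in particular, lim_{n→∞} ∥G_1μ_n^{V_k} − G_1μ^{V_k}∥_{L^∞(μ_n^{V_k}+μ^{V_k})}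 = 0 for every k ≥ 1. -/
open MeasureTheory ENNReal Set Filter Topology

/-- The `α`-potential density `R_α(x,y) = ∫_0^∞ e^{-αt} p_t(x,y) dt`. -/
noncomputable def potDensity {S : Type*} (p : ℝ → S → S → ℝ≥0∞) (α : ℝ) (x y : S) : ℝ≥0∞ :=
  ∫⁻ t in Set.Ioi (0 : ℝ), ENNReal.ofReal (Real.exp (-α * t)) * p t x y

/-- The `α`-potential `G_αμ(x) = ∫_S R_α(x,y) μ(dy)` of a Borel measure `μ`. -/
noncomputable def potential {S : Type*} [MeasurableSpace S]
    (p : ℝ → S → S → ℝ≥0∞) (α : ℝ) (μ : Measure S) (x : S) : ℝ≥0∞ :=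
  ∫⁻ y, potDensity p α x y ∂μ

section Helpers

theorem aux_mul_le (c a b : ℝ≥0∞) : a * (c * b) ≤ c * (a * a) + c * (b * b) := by
  rcases le_total a b with h | h
  · calc a * (c * b) ≤ b * (c * b) := by gcongr
      _ = c * (b * b) := by ring
      _ ≤ _ := le_add_self
  · calc a * (c * b) ≤ a * (c * a) := by gcongr
      _ = c * (a * a) := by ring
      _ ≤ _ := le_self_add

theorem aux_pbound {S : Type*} [MeasurableSpace S] (m : Measure S) [SigmaFinite m]
    (p : ℝ → S → S → ℝ≥0∞)
    (hp_meas : Measurable fun q : ℝ × S × S => p q.1 q.2.1 q.2.2)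
    (hsymm : ∀ t > (0 : ℝ), ∀ x y : S, p t x y = p t y x)
    (hCK : ∀ s > (0 : ℝ), ∀ t > (0 : ℝ), ∀ x y : S,
      p (t + s) x y = ∫⁻ z, p t x z * p s z y ∂m)
    (hsub : ∀ t > (0 : ℝ), ∀ x : S, (∫⁻ y, p t x y ∂m) ≤ 1)
    (v u : ℝ) (hv : 0 < v) (huv : v < u) (x y : S) :
    p u x y ≤ p v x x + p v y y := by
  obtain ⟨t, rfl⟩ : ∃ t, v = t + t := ⟨v / 2, by ring⟩
  obtain ⟨s, rfl⟩ : ∃ s, u = t + (s + t) := ⟨u - (t + t), by ring⟩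
  have ht : 0 < t := by linarith
  have hs : 0 < s := by linarith
  have m1 : ∀ r a, Measurable (fun z => p r a z) := fun r a =>
    hp_meas.comp (f := fun z => (r, a, z)) (by fun_prop)
  have m2 : ∀ r a, Measurable (fun z => p r z a) := fun r a =>
    hp_meas.comp (f := fun z => (r, z, a)) (by fun_prop)
  have m3 : ∀ r, Measurable (fun z : S × S => p r z.1 z.2) := fun r =>
    hp_meas.comp (f := fun z : S × S => (r, z.1, z.2)) (by fun_prop)
  have e1 : p (t + (s + t)) x y = ∫⁻ w, ∫⁻ w', p t x w * (p s w w' * p t w' y) ∂m ∂m := by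
    rw [hCK (s + t) (by linarith) t ht]
    refine lintegral_congr fun w => ?_
    rw [add_comm s t, add_comm t s, hCK t ht s hs]
    exact (lintegral_const_mul _ ((m1 s w).mul (m2 t y))).symm
  rw [e1]
  calc ∫⁻ w, ∫⁻ w', p t x w * (p s w w' * p t w' y) ∂m ∂m
      ≤ ∫⁻ w, ((∫⁻ w', p s w w' * (p t x w * p t x w) ∂m)
        + ∫⁻ w', p s w w' * (p t w' y * p t w' y) ∂m) ∂m := by
        refine lintegral_mono fun w => ?_
        rw [← lintegral_add_left ((m1 s w).mul_const _)]
        exact lintegral_mono fun w' => aux_mul_le _ _ _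
    _ = (∫⁻ w, (∫⁻ w', p s w w' * (p t x w * p t x w) ∂m) ∂m)
        + ∫⁻ w, (∫⁻ w', p s w w' * (p t w' y * p t w' y) ∂m) ∂m := by
        refine lintegral_add_right _ ?_
        refine Measurable.lintegral_prod_right'
          (f := fun z : S × S => p s z.1 z.2 * (p t z.2 y * p t z.2 y)) ?_
        exact (m3 s).mul (((m2 t y).comp measurable_snd).mul ((m2 t y).comp measurable_snd))
    _ ≤ _ := by
        refine add_le_add ?_ ?_
        · rw [hCK t ht t ht]
          refine lintegral_mono fun w => ?_
          rw [lintegral_mul_const _ (m1 s w), hsymm t ht w x]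
          calc _ ≤ 1 * (p t x w * p t x w) := by gcongr; exact hsub s hs w
            _ = _ := one_mul _
        · rw [hCK t ht t ht, lintegral_lintegral_swap]
          · refine lintegral_mono fun w => ?_
            rw [lintegral_mul_const _ (m2 s w), hsymm t ht y w]
            calc _ ≤ 1 * (p t w y * p t w y) := by
                  gcongr
                  simp_rw [fun z => hsymm s hs z w]
                  exact hsub s hs w
              _ = _ := one_mul _
          · exact ((m3 s).mul (((m2 t y).comp measurable_snd).mul
              ((m2 t y).comp measurable_snd))).aemeasurable

theorem aux_Fcont {S : Type*} [TopologicalSpace S] [FirstCountableTopology S]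
    [MeasurableSpace S] [BorelSpace S]
    (p : ℝ → S → S → ℝ≥0∞)
    (hp_meas : Measurable fun q : ℝ × S × S => p q.1 q.2.1 q.2.2)
    (hb : ∀ v u : ℝ, 0 < v → v < u → ∀ x y, p u x y ≤ p v x x + p v y y)
    (hp_cont : ContinuousOn (fun q : ℝ × S × S => p q.1 q.2.1 q.2.2)
      {q : ℝ × S × S | 0 < q.1})
    (hp_fin : ∀ t > (0 : ℝ), ∀ x y : S, p t x y ≠ ⊤) (δ : ℝ) (hδ : 0 < δ) :
    Continuous (fun z : S × S => ∫⁻ t in Set.Ici δ, ENNReal.ofReal (Real.exp (-1 * t)) * p t z.1 z.2)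
    ∧ ∀ z : S × S, (∫⁻ t in Set.Ici δ, ENNReal.ofReal (Real.exp (-1 * t)) * p t z.1 z.2) ≠ ⊤ := by
  have hop : IsOpen {q : ℝ × S × S | 0 < q.1} := isOpen_lt continuous_const continuous_fst
  have hct : ∀ t > (0:ℝ), Continuous (fun z : S × S => p t z.1 z.2) := by
    intro t ht
    exact hp_cont.comp_continuous (f := fun z : S × S => (t, z.1, z.2)) (by fun_prop) (fun _ => ht)
  have hv : 0 < δ / 2 := by linarith
  have hd : Continuous (fun x : S => p (δ/2) x x) :=
    (hct _ hv).comp (continuous_id.prodMk continuous_id)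
  have hmeas : ∀ z : S × S, Measurable fun t : ℝ => ENNReal.ofReal (Real.exp (-1 * t)) * p t z.1 z.2 := by
    intro z
    refine Measurable.mul (by fun_prop) ?_
    exact hp_meas.comp (f := fun t => (t, z.1, z.2)) (by fun_prop)
  have hexp : (∫⁻ t in Set.Ici δ, ENNReal.ofReal (Real.exp (-1 * t))) ≠ ⊤ := by
    have : IntegrableOn (fun t : ℝ => Real.exp (-1 * t)) (Set.Ici δ) := by
      rw [integrableOn_Ici_iff_integrableOn_Ioi]
      simpa using exp_neg_integrableOn_Ioi δ one_pos
    rw [← ofReal_integral_eq_lintegral_ofReal this (ae_of_all _ fun t => (Real.exp_pos _).le)]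
    exact ofReal_ne_top
  have hbfin : ∀ C : ℝ≥0∞, C ≠ ⊤ → (∫⁻ t in Set.Ici δ, ENNReal.ofReal (Real.exp (-1 * t)) * C) ≠ ⊤ := by
    intro C hC
    rw [lintegral_mul_const _ (by fun_prop)]
    exact ENNReal.mul_ne_top hexp hC
  constructor
  · rw [continuous_iff_continuousAt]
    intro z0
    set C : ℝ≥0∞ := (p (δ/2) z0.1 z0.1 + 1) + (p (δ/2) z0.2 z0.2 + 1) with hC
    have hf1 := hp_fin _ hv z0.1 z0.1
    have hf2 := hp_fin _ hv z0.2 z0.2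
    have hCfin : C ≠ ⊤ := by simp [hC, hf1, hf2]
    have ev1 : ∀ᶠ z : S × S in 𝓝 z0, p (δ/2) z.1 z.1 < p (δ/2) z0.1 z0.1 + 1 :=
      (hd.comp continuous_fst).continuousAt.eventually_lt continuousAt_const
        (ENNReal.lt_add_right hf1 one_ne_zero)
    have ev2 : ∀ᶠ z : S × S in 𝓝 z0, p (δ/2) z.2 z.2 < p (δ/2) z0.2 z0.2 + 1 :=
      (hd.comp continuous_snd).continuousAt.eventually_lt continuousAt_const
        (ENNReal.lt_add_right hf2 one_ne_zero)
    refine tendsto_lintegral_filter_of_dominated_convergence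
      (fun t => ENNReal.ofReal (Real.exp (-1 * t)) * C) ?_ ?_ (hbfin C hCfin) ?_
    · exact Eventually.of_forall hmeas
    · filter_upwards [ev1, ev2] with z h1 h2
      filter_upwards [ae_restrict_mem measurableSet_Ici] with t ht
      gcongr
      exact (hb (δ/2) t hv (by have : δ ≤ t := ht; linarith) _ _).trans (add_le_add h1.le h2.le)
    · filter_upwards [ae_restrict_mem measurableSet_Ici] with t ht
      refine ENNReal.Tendsto.const_mul ?_ (Or.inr ofReal_ne_top)
      exact (hct t (lt_of_lt_of_le hδ ht)).continuousAt
  · intro z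
    refine ne_top_of_le_ne_top (hbfin (p (δ/2) z.1 z.1 + p (δ/2) z.2 z.2) ?_) ?_
    · simp [hp_fin _ hv]
    · refine setLIntegral_mono' measurableSet_Ici fun t ht => ?_
      gcongr
      exact hb (δ/2) t hv (by have : δ ≤ t := ht; linarith) _ _

theorem aux_vague {S : Type*} [TopologicalSpace S] [R1Space S]
    [MeasurableSpace S] [BorelSpace S]
    (μ : Measure S) (μseq : ℕ → Measure S)
    [IsFiniteMeasureOnCompacts μ] [∀ n, IsFiniteMeasureOnCompacts (μseq n)]
    (hvague : ∀ f : S → ℝ, Continuous f → HasCompactSupport f →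
      Filter.Tendsto (fun n => ∫ x, f x ∂(μseq n)) Filter.atTop (nhds (∫ x, f x ∂μ)))
    (h : S → ℝ) (hh : Continuous h) (K : Set S) (hK : IsCompact K) (h1 : ∀ x ∉ K, h x = 1)
    (r : ℝ) (hr : r < 1) (hμ : μ {x | h x = r} = 0)
    (f : S → ℝ≥0∞) (hf : Continuous f) (hfin : ∀ x, f x ≠ ⊤) :
    Tendsto (fun n => ∫⁻ x in {x | h x < r}, f x ∂(μseq n)) atTop
      (𝓝 (∫⁻ x in {x | h x < r}, f x ∂μ)) := by
  set g : S → ℝ := fun x => (f x).toReal with hg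
  have hgc : Continuous g := continuous_iff_continuousAt.2 fun x =>
    (ENNReal.tendsto_toReal (hfin x)).comp hf.continuousAt
  have hg0 : ∀ x, 0 ≤ g x := fun x => toReal_nonneg
  have hgf : ∀ x, ENNReal.ofReal (g x) = f x := fun x => ofReal_toReal (hfin x)
  have hVm : MeasurableSet {x | h x < r} := (isOpen_lt hh continuous_const).measurableSet
  have hr' : 0 < 1 - r := by linarith
  let φ : ℕ → S → ℝ := fun j y => max 0 (min 1 ((r - h y) * (j + 1)))
  let ψ : ℕ → S → ℝ := fun j y => max 0 (min 1 (1 + (r - h y) * ((j + 1) / (1 - r))))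
  have hφc : ∀ j, Continuous (φ j) := fun j => by fun_prop
  have hψc : ∀ j, Continuous (ψ j) := fun j => by fun_prop
  have hφ0 : ∀ j y, r ≤ h y → φ j y = 0 := by
    intro j y hy
    refine max_eq_left ((min_le_right _ _).trans ?_)
    exact mul_nonpos_of_nonpos_of_nonneg (by linarith) (by positivity)
  have hψ1 : ∀ j y, h y ≤ r → ψ j y = 1 := by
    intro j y hy
    have : 0 ≤ (r - h y) * ((j + 1) / (1 - r)) := mul_nonneg (by linarith) (by positivity)
    show max 0 (min 1 _) = _
    rw [min_eq_left (by linarith)]; norm_num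
  have hφle : ∀ j y, φ j y ≤ 1 := fun j y => max_le zero_le_one (min_le_left _ _)
  have hψle : ∀ j y, ψ j y ≤ 1 := fun j y => max_le zero_le_one (min_le_left _ _)
  have hφnn : ∀ j y, 0 ≤ φ j y := fun j y => le_max_left _ _
  have hψnn : ∀ j y, 0 ≤ ψ j y := fun j y => le_max_left _ _
  have hψK : ∀ j, ∀ y ∉ K, ψ j y = 0 := by
    intro j y hy
    refine max_eq_left ((min_le_right _ _).trans ?_)
    rw [h1 y hy]
    have : (r - 1) * (((j:ℝ) + 1) / (1 - r)) = -(j + 1) := by field_simp; ring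
    rw [this]; have : (0:ℝ) ≤ j := by positivity
    linarith
  have hφK : ∀ j, ∀ y ∉ K, φ j y = 0 := fun j y hy => hφ0 j y (by rw [h1 y hy]; exact hr.le)
  have key : ∀ θ : S → ℝ, Continuous θ → (∀ y, 0 ≤ θ y) → (∀ y ∉ K, θ y = 0) →
      Tendsto (fun n => ∫⁻ x, ENNReal.ofReal (g x * θ x) ∂(μseq n)) atTop
        (𝓝 (∫⁻ x, ENNReal.ofReal (g x * θ x) ∂μ)) ∧
      (∫⁻ x, ENNReal.ofReal (g x * θ x) ∂μ) ≠ ⊤ := by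
    intro θ hθ h0 hθK
    have hc : Continuous fun x => g x * θ x := hgc.mul hθ
    have hcs : HasCompactSupport fun x => g x * θ x :=
      HasCompactSupport.intro hK fun x hx => by simp [hθK x hx]
    have nn : ∀ x, 0 ≤ g x * θ x := fun x => mul_nonneg (hg0 x) (h0 x)
    have e : ∀ ν : Measure S, IsFiniteMeasureOnCompacts ν →
        ∫⁻ x, ENNReal.ofReal (g x * θ x) ∂ν = ENNReal.ofReal (∫ x, g x * θ x ∂ν) := by
      intro ν _
      rw [ofReal_integral_eq_lintegral_ofReal (hc.integrable_of_hasCompactSupport hcs)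
        (ae_of_all _ nn)]
    rw [e μ inferInstance]
    simp_rw [fun n => e (μseq n) inferInstance]
    exact ⟨(ENNReal.continuous_ofReal.tendsto _).comp (hvague _ hc hcs), ofReal_ne_top⟩
  have hne : ∀ᵐ y ∂μ, h y ≠ r := by
    rw [ae_iff]; simpa using hμ
  have dom : ∀ θ : ℕ → S → ℝ, (∀ j, Continuous (θ j)) → (∀ j y, θ j y ≤ ψ 0 y) →
      (∀ y, h y < r → Tendsto (fun j => θ j y) atTop (𝓝 1)) →
      (∀ y, r < h y → Tendsto (fun j => θ j y) atTop (𝓝 0)) →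
      Tendsto (fun j => ∫⁻ x, ENNReal.ofReal (g x * θ j x) ∂μ) atTop
        (𝓝 (∫⁻ x in {x | h x < r}, f x ∂μ)) := by
    intro θ hθ hle t1 t0
    rw [← lintegral_indicator hVm]
    refine tendsto_lintegral_of_dominated_convergence (fun x => ENNReal.ofReal (g x * ψ 0 x))
      (fun j => (hgc.mul (hθ j)).measurable.ennreal_ofReal) ?_
      (key _ (hψc 0) (hψnn 0) (hψK 0)).2 ?_
    · intro j
      exact ae_of_all _ fun x => ENNReal.ofReal_le_ofReal
        (mul_le_mul_of_nonneg_left (hle j x) (hg0 x))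
    · filter_upwards [hne] with y hy
      rcases lt_or_gt_of_ne hy with hy | hy
      · rw [indicator_of_mem (by exact hy), ← hgf y]
        refine (ENNReal.continuous_ofReal.tendsto _).comp ?_
        simpa using (t1 y hy).const_mul (g y)
      · rw [indicator_of_notMem (by simpa using hy.le), ← ENNReal.ofReal_zero]
        refine (ENNReal.continuous_ofReal.tendsto _).comp ?_
        simpa using (t0 y hy).const_mul (g y)
  have hat : Tendsto (fun j : ℕ => (j : ℝ) + 1) atTop atTop :=
    tendsto_atTop_add_const_right _ _ tendsto_natCast_atTop_atTop
  have hψ0 : ∀ j y, ψ j y ≤ ψ 0 y := by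
    intro j y
    rcases le_total (h y) r with hy | hy
    · rw [hψ1 _ _ hy, hψ1 _ _ hy]
    · refine max_le_max le_rfl (min_le_min le_rfl (add_le_add le_rfl ?_))
      refine mul_le_mul_of_nonpos_left ?_ (by linarith)
      push_cast
      gcongr
      positivity
  have hφψ : ∀ j y, φ j y ≤ ψ 0 y := by
    intro j y
    rcases le_total (h y) r with hy | hy
    · rw [hψ1 _ _ hy]; exact hφle j y
    · rw [hφ0 _ _ hy]; exact hψnn 0 y
  have dφ := dom φ hφc hφψ (by
      intro y hy
      have : Tendsto (fun j : ℕ => (r - h y) * ((j:ℝ) + 1)) atTop atTop :=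
        hat.const_mul_atTop (by linarith)
      refine tendsto_const_nhds.congr' ?_
      filter_upwards [this.eventually_ge_atTop 1] with j hj
      show _ = max 0 (min 1 _)
      rw [min_eq_left hj]; norm_num) (by
      intro y hy
      simp_rw [fun j => hφ0 j y hy.le]
      exact tendsto_const_nhds)
  have dψ := dom ψ hψc hψ0 (by
      intro y hy
      simp_rw [fun j => hψ1 j y hy.le]
      exact tendsto_const_nhds) (by
      intro y hy
      have : Tendsto (fun j : ℕ => (r - h y) * (((j:ℝ) + 1) / (1 - r))) atTop atBot :=
        (hat.atTop_div_const hr').const_mul_atTop_of_neg (by linarith)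
      refine tendsto_const_nhds.congr' ?_
      filter_upwards [this.eventually_le_atBot (-1)] with j hj
      symm
      refine max_eq_left ((min_le_right _ _).trans (by linarith)))
  have lowφ : ∀ (ν : Measure S) j, ∫⁻ x, ENNReal.ofReal (g x * φ j x) ∂ν ≤
      ∫⁻ x in {x | h x < r}, f x ∂ν := by
    intro ν j
    rw [← lintegral_indicator hVm]
    refine lintegral_mono fun y => ?_
    by_cases hy : h y < r
    · rw [indicator_of_mem (by exact hy), ← hgf y]
      exact ENNReal.ofReal_le_ofReal (mul_le_of_le_one_right (hg0 y) (hφle j y))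
    · rw [hφ0 j y (not_lt.1 hy)]; simp
  have upψ : ∀ (ν : Measure S) j, ∫⁻ x in {x | h x < r}, f x ∂ν ≤
      ∫⁻ x, ENNReal.ofReal (g x * ψ j x) ∂ν := by
    intro ν j
    rw [← lintegral_indicator hVm]
    refine lintegral_mono fun y => ?_
    by_cases hy : h y < r
    · rw [indicator_of_mem (by exact hy), hψ1 j y hy.le, mul_one, hgf]
    · rw [indicator_of_notMem (by exact hy)]; exact zero_le
  refine tendsto_order.2 ⟨fun a ha => ?_, fun a ha => ?_⟩
  · obtain ⟨j, hj⟩ := ((tendsto_order.1 dφ).1 a ha).exists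
    filter_upwards [(tendsto_order.1 (key _ (hφc j) (hφnn j) (hφK j)).1).1 a hj] with n hn
    exact hn.trans_le (lowφ _ j)
  · obtain ⟨j, hj⟩ := ((tendsto_order.1 dψ).2 a ha).exists
    filter_upwards [(tendsto_order.1 (key _ (hψc j) (hψnn j) (hψK j)).1).2 a hj] with n hn
    exact (upψ _ j).trans_lt hn

theorem aux_unif {S : Type*} [TopologicalSpace S]
    [MeasurableSpace S] [BorelSpace S]
    (μ : Measure S) (μseq : ℕ → Measure S) (V K : Set S) (hV : MeasurableSet V)
    (hVK : V ⊆ K) (hK : IsCompact K) (hμV : μ V ≠ ⊤)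
    (hconv : ∀ f : S → ℝ≥0∞, Continuous f → (∀ x, f x ≠ ⊤) →
      Tendsto (fun n => ∫⁻ x in V, f x ∂(μseq n)) atTop (𝓝 (∫⁻ x in V, f x ∂μ)))
    (F : S × S → ℝ≥0∞) (hF : Continuous F) (hFfin : ∀ z, F z ≠ ⊤)
    (ε : ℝ≥0∞) (hε : 0 < ε) (hεt : ε ≠ ⊤) :
    ∀ᶠ n in atTop, ∀ x ∈ K,
      (∫⁻ y in V, F (x, y) ∂(μseq n)) ≤ (∫⁻ y in V, F (x, y) ∂μ) + (ε + ε + ε) ∧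
      (∫⁻ y in V, F (x, y) ∂μ) ≤ (∫⁻ y in V, F (x, y) ∂(μseq n)) + (ε + ε + ε) := by
  have hsec : ∀ x, Continuous fun y => F (x, y) := fun x => by fun_prop
  have hC : ∀ᶠ n in atTop, μseq n V ≤ μ V + 1 := by
    have := hconv (fun _ => 1) continuous_const (by simp)
    simp only [lintegral_const, Measure.restrict_apply MeasurableSet.univ, univ_inter,
      one_mul] at this
    exact ((tendsto_order.1 this).2 _ (ENNReal.lt_add_right hμV one_ne_zero)).mono
      fun n hn => hn.le
  have hC0 : μ V + 1 ≠ 0 := by simp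
  have hCt : μ V + 1 ≠ ⊤ := by simp [hμV]
  set η := ε / (μ V + 1) with hη
  have hη0 : η ≠ 0 := by simp [hη, ENNReal.div_eq_zero_iff, hε.ne', hμV]
  have hηC : η * (μ V + 1) = ε := ENNReal.div_mul_cancel hC0 hCt
  have cmp : ∀ (ν : Measure S) (x x' : S), ν V ≤ μ V + 1 →
      (∀ y ∈ K, F (x, y) ≤ F (x', y) + η) →
      ∫⁻ y in V, F (x, y) ∂ν ≤ (∫⁻ y in V, F (x', y) ∂ν) + ε := by
    intro ν x x' hν hxx
    calc ∫⁻ y in V, F (x, y) ∂ν ≤ ∫⁻ y in V, (F (x', y) + η) ∂ν :=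
          setLIntegral_mono' hV fun y hy => hxx y (hVK hy)
      _ = (∫⁻ y in V, F (x', y) ∂ν) + η * ν V := by
          rw [lintegral_add_right _ measurable_const, setLIntegral_const]
      _ ≤ _ := by rw [← hηC]; gcongr
  refine hK.induction_on (p := fun U => ∀ᶠ n in atTop, ∀ x ∈ U,
      (∫⁻ y in V, F (x, y) ∂(μseq n)) ≤ (∫⁻ y in V, F (x, y) ∂μ) + (ε + ε + ε) ∧
      (∫⁻ y in V, F (x, y) ∂μ) ≤ (∫⁻ y in V, F (x, y) ∂(μseq n)) + (ε + ε + ε)) ?_ ?_ ?_ ?_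
  · simp
  · intro s t hst ht
    exact ht.mono fun n hn x hx => hn x (hst hx)
  · intro s t hs ht
    filter_upwards [hs, ht] with n h1 h2 x hx
    exact hx.elim (h1 x) (h2 x)
  · intro x0 _
    have tube : ∀ᶠ x in 𝓝 x0, ∀ y ∈ K, F (x, y) ≤ F (x0, y) + η ∧ F (x0, y) ≤ F (x, y) + η := by
      refine hK.eventually_forall_of_forall_eventually
        (P := fun x y => F (x, y) ≤ F (x0, y) + η ∧ F (x0, y) ≤ F (x, y) + η) ?_
      intro y _
      have c1 : Continuous fun z : S × S => F (x0, z.2) := by fun_prop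
      have c2 : Continuous fun z : S × S => F (z.1, z.2) := by fun_prop
      have l : F (x0, y) < F (x0, y) + η := ENNReal.lt_add_right (hFfin _) hη0
      have e1 := (c2.continuousAt (x := (x0, y))).eventually_lt
        (g := fun z : S × S => F (x0, z.2) + η) (c1.add continuous_const).continuousAt l
      have e2 := (c1.continuousAt (x := (x0, y))).eventually_lt
        (g := fun z : S × S => F (z.1, z.2) + η) (c2.add continuous_const).continuousAt l
      filter_upwards [e1, e2] with z h1 h2
      exact ⟨h1.le, h2.le⟩
    refine ⟨_, mem_nhdsWithin_of_mem_nhds tube, ?_⟩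
    have hlim := hconv _ (hsec x0) (fun y => hFfin _)
    have hBt : (∫⁻ y in V, F (x0, y) ∂μ) ≠ ⊤ := by
      obtain ⟨M, hM, hb⟩ : ∃ M : ℝ≥0∞, M ≠ ⊤ ∧ ∀ y ∈ K, F (x0, y) ≤ M := by
        rcases K.eq_empty_or_nonempty with h | h
        · exact ⟨0, by simp, by simp [h]⟩
        · obtain ⟨y, -, hy⟩ := hK.exists_isMaxOn h (hsec x0).continuousOn
          exact ⟨_, hFfin (x0, y), hy⟩
      refine ne_top_of_le_ne_top ?_ (setLIntegral_mono' hV fun y hy => hb y (hVK hy))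
      rw [setLIntegral_const]
      exact ENNReal.mul_ne_top hM hμV
    have hnear := (ENNReal.tendsto_nhds hBt).1 hlim ε hε
    filter_upwards [hC, hnear] with n hn hnn x hx
    have a1 : (∫⁻ y in V, F (x0, y) ∂(μseq n)) ≤ (∫⁻ y in V, F (x0, y) ∂μ) + ε := hnn.2
    have a2 : (∫⁻ y in V, F (x0, y) ∂μ) ≤ (∫⁻ y in V, F (x0, y) ∂(μseq n)) + ε :=
      tsub_le_iff_right.1 hnn.1
    have b1 := cmp (μseq n) x x0 hn fun y hy => (hx y hy).1
    have b2 := cmp (μseq n) x0 x hn fun y hy => (hx y hy).2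
    have b3 := cmp μ x x0 le_self_add fun y hy => (hx y hy).1
    have b4 := cmp μ x0 x le_self_add fun y hy => (hx y hy).2
    constructor
    · calc _ ≤ _ := b1
        _ ≤ ((∫⁻ y in V, F (x, y) ∂μ) + ε + ε) + ε := by gcongr; exact a1.trans (by gcongr)
        _ = _ := by ring
    · calc _ ≤ _ := b3
        _ ≤ ((∫⁻ y in V, F (x, y) ∂(μseq n)) + ε + ε) + ε := by gcongr; exact a2.trans (by gcongr)
        _ = _ := by ring

theorem aux_main {S : Type*} [TopologicalSpace S] [SecondCountableTopology S]
    [MeasurableSpace S] [BorelSpace S]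
    (p : ℝ → S → S → ℝ≥0∞)
    (hp_meas : Measurable fun q : ℝ × S × S => p q.1 q.2.1 q.2.2)
    (hb : ∀ v u : ℝ, 0 < v → v < u → ∀ x y, p u x y ≤ p v x x + p v y y)
    (hp_cont : ContinuousOn (fun q : ℝ × S × S => p q.1 q.2.1 q.2.2)
      {q : ℝ × S × S | 0 < q.1})
    (hp_fin : ∀ t > (0 : ℝ), ∀ x y : S, p t x y ≠ ⊤)
    (μ : Measure S) (μseq : ℕ → Measure S) [SFinite μ] [∀ n, SFinite (μseq n)]
    (V K : Set S) (hV : MeasurableSet V)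
    (hVK : V ⊆ K) (hK : IsCompact K) (hμV : μ V ≠ ⊤)
    (hconv : ∀ f : S → ℝ≥0∞, Continuous f → (∀ x, f x ≠ ⊤) →
      Tendsto (fun n => ∫⁻ x in V, f x ∂(μseq n)) atTop (𝓝 (∫⁻ x in V, f x ∂μ)))
    (hshort : Filter.Tendsto
        (fun t : ℝ => ⨆ n, ⨆ x ∈ K, ∫⁻ s in Set.Ioo (0 : ℝ) t, ∫⁻ y in K, p s x y ∂(μseq n))
        (nhdsWithin 0 (Set.Ioi 0)) (nhds 0)) :
    Filter.Tendsto
          (fun n => ⨆ x ∈ K,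
            max (potential p 1 ((μseq n).restrict V) x - potential p 1 (μ.restrict V) x)
                (potential p 1 (μ.restrict V) x - potential p 1 ((μseq n).restrict V) x))
          Filter.atTop (nhds 0) := by
  refine ENNReal.tendsto_nhds_zero.2 fun ε' hε' => ?_
  obtain ⟨ε, hε, hεt, hεε⟩ : ∃ ε : ℝ≥0∞, 0 < ε ∧ ε ≠ ⊤ ∧ ε + (ε + ε + ε) ≤ ε' := by
    refine ⟨min ε' 1 / 4, ENNReal.div_pos (by simp [hε'.ne']) (by simp), ?_, ?_⟩
    · exact (ENNReal.div_lt_top (by simp) (by simp)).ne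
    · have : min ε' 1 / 4 + (min ε' 1 / 4 + min ε' 1 / 4 + min ε' 1 / 4) = (min ε' 1 / 4) * 4 := by
        ring
      rw [this, ENNReal.div_mul_cancel (by simp) (by simp)]
      exact min_le_left _ _
  obtain ⟨δ, hδs, hδ⟩ := ((ENNReal.tendsto_nhds_zero.1 hshort ε hε).and
    self_mem_nhdsWithin).exists
  replace hδ : 0 < δ := hδ
  have hcx : ∀ t > (0:ℝ), ∀ x, Continuous (fun y : S => p t x y) := by
    intro t ht x
    exact hp_cont.comp_continuous (f := fun y : S => (t, x, y)) (by fun_prop) (fun _ => ht)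
  obtain ⟨hFc, hFt⟩ := aux_Fcont p hp_meas hb hp_cont hp_fin δ hδ
  have m2 : ∀ x, Measurable fun q : ℝ × S => p q.1 x q.2 := fun x =>
    hp_meas.comp (f := fun q : ℝ × S => (q.1, x, q.2)) (by fun_prop)
  have m2s : ∀ x, Measurable fun q : S × ℝ => p q.2 x q.1 := fun x =>
    hp_meas.comp (f := fun q : S × ℝ => (q.2, x, q.1)) (by fun_prop)
  set F : S × S → ℝ≥0∞ :=
    fun z => ∫⁻ t in Set.Ici δ, ENNReal.ofReal (Real.exp (-1 * t)) * p t z.1 z.2 with hFdef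
  let A : Measure S → S → ℝ≥0∞ := fun ν x =>
    ∫⁻ y in V, (∫⁻ t in Set.Ioo (0:ℝ) δ, ENNReal.ofReal (Real.exp (-1 * t)) * p t x y) ∂ν
  have split : ∀ (ν : Measure S) x,
      potential p 1 (ν.restrict V) x = A ν x + ∫⁻ y in V, F (x, y) ∂ν := by
    intro ν x
    have hFm : Measurable fun y => F (x, y) :=
      (hFc.comp (Continuous.prodMk_right x)).measurable
    show _ = (∫⁻ y in V, _ ∂ν) + _
    rw [← lintegral_add_right _ hFm]
    refine lintegral_congr fun y => ?_
    rw [potDensity, ← Ioo_union_Ici_eq_Ioi hδ, lintegral_union measurableSet_Ici]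
    exact Set.disjoint_left.2 fun t h1 h2 => absurd h1.2 (not_lt.2 h2)
  have hA1 : ∀ (ν : Measure S) [SFinite ν] x, A ν x ≤ ∫⁻ s in Set.Ioo 0 δ, ∫⁻ y in V, p s x y ∂ν := by
    intro ν _ x
    rw [lintegral_lintegral_swap (m2 x).aemeasurable]
    refine lintegral_mono fun y => setLIntegral_mono' measurableSet_Ioo fun t ht => ?_
    refine mul_le_of_le_one_left zero_le ?_
    rw [ENNReal.ofReal_le_one, Real.exp_le_one_iff]
    linarith [ht.1]
  have hA2 : ∀ n, ∀ x ∈ K, ∫⁻ s in Set.Ioo 0 δ, ∫⁻ y in V, p s x y ∂(μseq n) ≤ ε := by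
    intro n x hx
    refine le_trans ?_ hδs
    refine le_trans ?_ (le_iSup _ n)
    refine le_trans ?_ (le_iSup₂ (f := fun x (_ : x ∈ K) =>
      ∫⁻ s in Set.Ioo (0 : ℝ) δ, ∫⁻ y in K, p s x y ∂(μseq n)) x hx)
    exact lintegral_mono fun s => lintegral_mono_set hVK
  have hA3 : ∀ x ∈ K, ∫⁻ s in Set.Ioo 0 δ, ∫⁻ y in V, p s x y ∂μ ≤ ε := by
    intro x hx
    calc ∫⁻ s in Set.Ioo 0 δ, ∫⁻ y in V, p s x y ∂μ
        = ∫⁻ s in Set.Ioo 0 δ, liminf (fun n => ∫⁻ y in V, p s x y ∂(μseq n)) atTop := by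
          refine setLIntegral_congr_fun measurableSet_Ioo fun s hs => ?_
          exact (hconv _ (hcx s hs.1 x) (hp_fin s hs.1 x)).liminf_eq.symm
      _ ≤ liminf (fun n => ∫⁻ s in Set.Ioo 0 δ, ∫⁻ y in V, p s x y ∂(μseq n)) atTop :=
          lintegral_liminf_le fun n => (m2 x).lintegral_prod_right'
      _ ≤ ε := by
          refine liminf_le_of_le (by isBoundedDefault) fun b hb' => ?_
          obtain ⟨n, hn⟩ := hb'.exists
          exact hn.trans (hA2 n x hx)
  filter_upwards [aux_unif μ μseq V K hV hVK hK hμV hconv F hFc hFt ε hε hεt] with n hn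
  refine iSup₂_le fun x hx => ?_
  obtain ⟨h1, h2⟩ := hn x hx
  have k1 := (hA1 (μseq n) x).trans (hA2 n x hx)
  have k2 := (hA1 μ x).trans (hA3 x hx)
  rw [split, split]
  refine le_trans ?_ hεε
  refine max_le (tsub_le_iff_left.2 ?_) (tsub_le_iff_left.2 ?_)
  · calc _ ≤ ε + ((∫⁻ y in V, F (x, y) ∂μ) + (ε + ε + ε)) := add_le_add k1 h1
      _ = (∫⁻ y in V, F (x, y) ∂μ) + (ε + (ε + ε + ε)) := by ring
      _ ≤ _ := by gcongr; exact le_add_self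
  · calc _ ≤ ε + ((∫⁻ y in V, F (x, y) ∂(μseq n)) + (ε + ε + ε)) := add_le_add k2 h2
      _ = (∫⁻ y in V, F (x, y) ∂(μseq n)) + (ε + (ε + ε + ε)) := by ring
      _ ≤ _ := by gcongr; exact le_add_self

theorem aux_exhaust {S : Type*} [TopologicalSpace S] [LocallyCompactSpace S]
    [SecondCountableTopology S] [T2Space S]
    [MeasurableSpace S] [BorelSpace S] (μ : Measure S) [SFinite μ] :
    ∃ (K : ℕ → Set S) (h : ℕ → S → ℝ) (r : ℕ → ℝ), (∀ k, IsCompact (K k)) ∧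
      (∀ k, Continuous (h k)) ∧ (∀ k, ∀ x ∉ K k, h k x = 1) ∧ (∀ k, r k < 1) ∧
      (∀ k, μ {x | h k x = r k} = 0) ∧ Monotone (fun k => {x | h k x < r k}) ∧
      (⋃ k, {x | h k x < r k}) = univ := by
  let E := CompactExhaustion.choice S
  have H : ∀ k, ∃ (h : S → ℝ) (r : ℝ), Continuous h ∧ (∀ x ∉ E (k+1), h x = 1) ∧ r < 1 ∧
      μ {x | h x = r} = 0 ∧ ∀ x ∈ E k, h x < r := by
    intro k
    obtain ⟨f, f0, f1, -⟩ := exists_continuous_zero_one_of_isCompact (E.isCompact k)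
      (isOpen_interior (s := E (k+1))).isClosed_compl
      (disjoint_compl_right_iff_subset.2 (E.subset_interior_succ k))
    have hc := Measure.countable_meas_level_set_pos (μ := μ) f.continuous.measurable
    obtain ⟨r, hr, hr'⟩ : ∃ r ∈ Ioo (0:ℝ) 1, r ∉ { t : ℝ | 0 < μ { a : S | f a = t } } := by
      by_contra hcon
      push Not at hcon
      exact (Cardinal.Real.Ioo_countable_iff.not.2 (by norm_num)) (hc.mono hcon)
    refine ⟨f, r, f.continuous, ?_, hr.2, by simpa using hr', ?_⟩
    · intro x hx
      exact f1 (fun hh => hx (interior_subset hh))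
    · intro x hx
      rw [f0 hx]; exact hr.1
  choose h r hh h1 hr hμ h0 using H
  refine ⟨fun k => E (k+1), h, r, fun k => E.isCompact _, hh, h1, hr, hμ, ?_, ?_⟩
  · refine monotone_nat_of_le_succ fun k x hx => h0 _ _ ?_
    by_contra hx'
    have : h k x < r k := hx
    rw [h1 k x hx'] at this
    linarith [hr k]
  · refine eq_univ_of_forall fun x => ?_
    obtain ⟨k, hk⟩ := E.exists_mem x
    exact mem_iUnion.2 ⟨k, h0 k x hk⟩

end Helpers

/-- Under (B1) joint continuity of `p`, (B2) vague convergence `μ_n → μ` of Radon measures,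
and (B3) uniform short-time control on compacts, there is an increasing sequence `(V_k)` of
relatively compact open sets with union `S` such that for each `k`, the `1`-potentials of the
restricted measures converge uniformly on `closure (V_k)`; in particular
`‖G_1μ_n^{V_k} − G_1μ^{V_k}‖_{L^∞(μ_n^{V_k}+μ^{V_k})} → 0` for every `k`. (Absolute differences
of `[0,∞]`-valued quantities are expressed as `max (a - b) (b - a)`.) -/
theorem sufficient_condition_general_assumption
    {S : Type*} [TopologicalSpace S] [LocallyCompactSpace S]
    [TopologicalSpace.SeparableSpace S] [TopologicalSpace.MetrizableSpace S]
    [MeasurableSpace S] [BorelSpace S]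
    (m : Measure S) [SigmaFinite m] [IsFiniteMeasureOnCompacts m]
    (hfull : ∀ U : Set S, IsOpen U → U.Nonempty → 0 < m U)
    (p : ℝ → S → S → ℝ≥0∞)
    (hp_meas : Measurable fun q : ℝ × S × S => p q.1 q.2.1 q.2.2)
    (hsymm : ∀ t > (0 : ℝ), ∀ x y : S, p t x y = p t y x)
    (hCK : ∀ s > (0 : ℝ), ∀ t > (0 : ℝ), ∀ x y : S,
      p (t + s) x y = ∫⁻ z, p t x z * p s z y ∂m)
    (hsub : ∀ t > (0 : ℝ), ∀ x : S, (∫⁻ y, p t x y ∂m) ≤ 1)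
    -- (B1)
    (hp_cont : ContinuousOn (fun q : ℝ × S × S => p q.1 q.2.1 q.2.2)
      {q : ℝ × S × S | 0 < q.1})
    (hp_fin : ∀ t > (0 : ℝ), ∀ x y : S, p t x y ≠ ⊤)
    -- (B2) Radon measures converging vaguely
    (μ : Measure S) (μseq : ℕ → Measure S)
    [IsFiniteMeasureOnCompacts μ] [∀ n, IsFiniteMeasureOnCompacts (μseq n)]
    [μ.InnerRegular] [∀ n, (μseq n).InnerRegular]
    (hvague : ∀ f : S → ℝ, Continuous f → HasCompactSupport f →
      Filter.Tendsto (fun n => ∫ x, f x ∂(μseq n)) Filter.atTop (nhds (∫ x, f x ∂μ)))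
    -- (B3)
    (hshort : ∀ K : Set S, IsCompact K →
      Filter.Tendsto
        (fun t : ℝ => ⨆ n, ⨆ x ∈ K, ∫⁻ s in Set.Ioo (0 : ℝ) t, ∫⁻ y in K, p s x y ∂(μseq n))
        (nhdsWithin 0 (Set.Ioi 0)) (nhds 0)) :
    ∃ V : ℕ → Set S,
      (∀ k, IsOpen (V k)) ∧ (∀ k, IsCompact (closure (V k))) ∧ Monotone V
      ∧ (⋃ k, V k) = Set.univ
      ∧ ∀ k,
        Filter.Tendsto
          (fun n => ⨆ x ∈ closure (V k),
            max (potential p 1 ((μseq n).restrict (V k)) x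
                  - potential p 1 (μ.restrict (V k)) x)
                (potential p 1 (μ.restrict (V k)) x
                  - potential p 1 ((μseq n).restrict (V k)) x))
          Filter.atTop (nhds 0)
        ∧ Filter.Tendsto
            (fun n => essSup
              (fun x => max (potential p 1 ((μseq n).restrict (V k)) x
                    - potential p 1 (μ.restrict (V k)) x)
                  (potential p 1 (μ.restrict (V k)) x
                    - potential p 1 ((μseq n).restrict (V k)) x))
              ((μseq n).restrict (V k) + μ.restrict (V k)))
            Filter.atTop (nhds 0) := by
  letI := TopologicalSpace.metrizableSpaceMetric S
  haveI : SecondCountableTopology S := UniformSpace.secondCountable_of_separable S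
  obtain ⟨K, h, r, hK, hh, h1, hr, hμ, hmono, hun⟩ := aux_exhaust μ
  have hcl : ∀ k, closure {x | h k x < r k} ⊆ K k := by
    intro k
    refine closure_minimal (fun x hx => ?_) (hK k).isClosed
    by_contra hx'
    have : h k x < r k := hx
    rw [h1 k x hx'] at this
    linarith [hr k]
  have hclc : ∀ k, IsCompact (closure {x | h k x < r k}) := fun k =>
    (hK k).of_isClosed_subset isClosed_closure (hcl k)
  have hop : ∀ k, IsOpen {x | h k x < r k} := fun k => isOpen_lt (hh k) continuous_const
  refine ⟨fun k => {x | h k x < r k}, hop, hclc, hmono, hun, fun k => ?_⟩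
  have main := aux_main p hp_meas
    (fun v u hv huv x y => aux_pbound m p hp_meas hsymm hCK hsub v u hv huv x y)
    hp_cont hp_fin μ μseq {x | h k x < r k} (closure {x | h k x < r k})
    (hop k).measurableSet subset_closure (hclc k)
    (measure_ne_top_of_subset subset_closure (hclc k).measure_lt_top.ne)
    (fun f hf hfin => aux_vague μ μseq hvague (h k) (hh k) (K k) (hK k) (h1 k) (r k) (hr k)
      (hμ k) f hf hfin) (hshort _ (hclc k))
  refine ⟨main, tendsto_of_tendsto_of_tendsto_of_le_of_le tendsto_const_nhds main
    (fun _ => zero_le) fun n => ?_⟩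
  refine essSup_le_of_ae_le _ ?_
  have hmem : ∀ᵐ x ∂((μseq n).restrict {x | h k x < r k} + μ.restrict {x | h k x < r k}),
      x ∈ {x | h k x < r k} := by
    rw [ae_add_measure_iff]
    exact ⟨ae_restrict_mem (hop k).measurableSet, ae_restrict_mem (hop k).measurableSet⟩
  filter_upwards [hmem] with x hx
  exact le_iSup₂ (f := fun x (_ : x ∈ closure {x | h k x < r k}) =>
    max (potential p 1 ((μseq n).restrict {x | h k x < r k}) x
        - potential p 1 (μ.restrict {x | h k x < r k}) x)
      (potential p 1 (μ.restrict {x | h k x < r k}) x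
        - potential p 1 ((μseq n).restrict {x | h k x < r k}) x)) x (subset_closure hx)
end
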